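/- Let L be a partial order and κ a strong limit cardinal. Then: κ ≤ μ(L) if and only if κ ≤ |L|; moreover |L| > κ implies μ(L) > κ, and μ(L) = κ implies |L| = κ. -/

import Mathlib

universe u v w

open Cardinal

/-- A well-ordered chain: a chain whose induced strict order is well-founded. -/
def IsWellChain {L : Type u} [PartialOrder L] (A : Set L) : Prop :=
  IsChain (· ≤ ·) A ∧ A.WellFoundedOn (· < ·)

/-- A co-well-ordered chain: a chain well-ordered under the reverse order. -/
def IsCoWellChain {L : Type u} [PartialOrder L] (A : Set L) : Prop :=
  IsChain (· ≤ ·) A ∧ A.WellFoundedOn (· > ·)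

/-- A subset of a partial order is uniform if it is an antichain, a well-ordered chain,
or a co-well-ordered chain. -/
def IsUniform {L : Type u} [PartialOrder L] (A : Set L) : Prop :=
  IsAntichain (· ≤ ·) A ∨ IsWellChain A ∨ IsCoWellChain A

/-- `mu L` is the least cardinal `m` such that `L` has no uniform subset of cardinality `m`. -/
noncomputable def mu (L : Type u) [PartialOrder L] : Cardinal.{u} :=
  sInf {m : Cardinal.{u} | ¬ ∃ A : Set L, IsUniform A ∧ #A = m}

/-- `nu2 L₁ L₂` is the least cardinal `n` such that there is no family of `n` pairwise
incomparable monotone functions from `L₁` to `L₂` (functions ordered pointwise). -/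
noncomputable def nu2 (L₁ : Type u) (L₂ : Type v) [PartialOrder L₁] [PartialOrder L₂] :
    Cardinal.{max u v} :=
  sInf {n : Cardinal.{max u v} |
    ¬ ∃ S : Set (L₁ → L₂), (∀ f ∈ S, Monotone f) ∧ IsAntichain (· ≤ ·) S ∧ #S = n}

/-- `nu L = nu2 L L`. -/
noncomputable def nu (L : Type u) [PartialOrder L] : Cardinal.{u} := nu2 L L

/-- `muInf L = sup_{n} mu (Lⁿ)` for `n ≥ 1`. -/
noncomputable def muInf (L : Type u) [PartialOrder L] : Cardinal.{u} :=
  ⨆ n : ℕ, mu (Fin (n + 1) → L)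

/-- `nuInf L = sup_{n} nu (Lⁿ, L)` for `n ≥ 1`. -/
noncomputable def nuInf (L : Type u) [PartialOrder L] : Cardinal.{u} :=
  ⨆ n : ℕ, nu2 (Fin (n + 1) → L) L

/-- A function `(Fin n → L) → L` is a polynomial function if it lies in the smallest
sublattice of the function lattice containing all coordinate projections and all
constant functions. -/
def IsPolynomialFn (L : Type u) [Lattice L] (n : ℕ) (f : (Fin n → L) → L) : Prop :=
  f ∈ latticeClosure ({g : (Fin n → L) → L | ∃ i : Fin n, g = fun x => x i} ∪
    {g : (Fin n → L) → L | ∃ c : L, g = fun _ => c})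

/-- A lattice is order polynomially complete if for every `n ≥ 1` every monotone
`n`-ary function is a polynomial function. -/
def OPC (L : Type u) [Lattice L] : Prop :=
  ∀ n : ℕ, 1 ≤ n → ∀ f : (Fin n → L) → L, Monotone f → IsPolynomialFn L n f

/-- The three possible comparison types between distinct blocks of a canonical family. -/
inductive CompType : Type
  | lt
  | gt
  | incomp

/-- The relation on `L` associated to a comparison type. -/
def CompType.rel {L : Type u} [PartialOrder L] : CompType → L → L → Prop
  | .lt, a, b => a < b
  | .gt, a, b => b < a
  | .incomp, a, b => ¬ a ≤ b ∧ ¬ b ≤ a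

/-- A family of subsets of `L` is canonical if each member is uniform, all members are
of the same type, and comparison between elements of distinct members depends only on
the pair of indices. -/
def IsCanonical {L : Type u} [PartialOrder L] {ι : Type v} (A : ι → Set L) : Prop :=
  ((∀ i, IsAntichain (· ≤ ·) (A i)) ∨ (∀ i, IsWellChain (A i)) ∨ (∀ i, IsCoWellChain (A i))) ∧
  ∃ F : ι → ι → CompType, ∀ i j, i ≠ j → ∀ a ∈ A i, ∀ b ∈ A j, (F i j).rel a b

theorem IsUniform.subset {L : Type u} [PartialOrder L] {A B : Set L} (h : IsUniform A)
    (hB : B ⊆ A) : IsUniform B := by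
  rcases h with h | h | h
  · exact Or.inl (h.subset hB)
  · exact Or.inr (Or.inl ⟨h.1.mono hB, h.2.subset hB⟩)
  · exact Or.inr (Or.inr ⟨h.1.mono hB, h.2.subset hB⟩)

theorem isUniform_range {L : Type u} [PartialOrder L] {J : Type v} [LinearOrder J]
    [WellFoundedLT J] (f : J → L) (p q : Prop)
    (h : ∀ i j, i < j → (f i ≤ f j ↔ p) ∧ (f j ≤ f i ↔ q))
    (hne : ∀ i j, i < j → f i ≠ f j) : IsUniform (Set.range f) := by
  by_cases hp : p
  · right; left
    have hlt : ∀ i j, i < j → f i < f j := fun i j hij =>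
      lt_of_le_of_ne ((h i j hij).1.2 hp) (hne i j hij)
    have hm : StrictMono f := fun i j hij => hlt i j hij
    refine ⟨?_, ?_⟩
    · rintro _ ⟨i, rfl⟩ _ ⟨j, rfl⟩ _
      rcases le_total i j with hij | hij
      · exact Or.inl (hm.monotone hij)
      · exact Or.inr (hm.monotone hij)
    · rw [Set.wellFoundedOn_range]
      exact wellFounded_lt.mono fun a b hab => hm.lt_iff_lt.1 hab
  · by_cases hq : q
    · right; right
      have hm : StrictAnti f := fun i j hij =>
        lt_of_le_of_ne ((h i j hij).2.2 hq) (hne i j hij).symm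
      refine ⟨?_, ?_⟩
      · rintro _ ⟨i, rfl⟩ _ ⟨j, rfl⟩ _
        rcases le_total i j with hij | hij
        · exact Or.inr (hm.antitone hij)
        · exact Or.inl (hm.antitone hij)
      · rw [Set.wellFoundedOn_range]
        exact wellFounded_lt.mono fun a b hab => hm.lt_iff_gt.1 hab
    · left
      rintro _ ⟨i, rfl⟩ _ ⟨j, rfl⟩ hij hle
      rcases lt_trichotomy i j with hlt | rfl | hlt
      · exact hp ((h i j hlt).1.1 hle)
      · exact hij rfl
      · exact hq ((h j i hlt).2.1 hle)

/-- Infinite partial orders have infinite uniform subsets. -/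
theorem exists_uniform_aleph0 {L : Type u} [PartialOrder L] (hL : ℵ₀ ≤ #L) :
    ∃ A : Set L, IsUniform A ∧ ℵ₀ ≤ #A := by
  have : Infinite L := infinite_iff.2 hL
  let f := Infinite.natEmbedding L
  have key : ∃ g : ℕ ↪o ℕ, ∃ p q : Prop, ∀ i j, i < j →
      (f (g i) ≤ f (g j) ↔ p) ∧ (f (g j) ≤ f (g i) ↔ q) := by
    obtain ⟨g, hg⟩ := exists_increasing_or_nonincreasing_subseq (· ≤ ·) f
    obtain ⟨g', hg'⟩ := exists_increasing_or_nonincreasing_subseq (· ≥ ·) (f ∘ g)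
    have h1 : ∃ p : Prop, ∀ i j, i < j → (f (g i) ≤ f (g j) ↔ p) := by
      rcases hg with hg | hg
      · exact ⟨True, fun i j hij => iff_true_intro (hg i j hij)⟩
      · exact ⟨False, fun i j hij => iff_false_intro (hg i j hij)⟩
    have h2 : ∃ q : Prop, ∀ i j, i < j → (f (g (g' j)) ≤ f (g (g' i)) ↔ q) := by
      rcases hg' with hg | hg
      · exact ⟨True, fun i j hij => iff_true_intro (hg i j hij)⟩
      · exact ⟨False, fun i j hij => iff_false_intro (hg i j hij)⟩
    obtain ⟨p, hp⟩ := h1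
    obtain ⟨q, hq⟩ := h2
    exact ⟨g'.trans g, p, q, fun i j hij => ⟨hp _ _ (g'.lt_iff_lt.2 hij), hq i j hij⟩⟩
  obtain ⟨g, p, q, h⟩ := key
  have hinj : Function.Injective (fun i => f (g i)) := f.injective.comp g.injective
  refine ⟨Set.range fun i => f (g i), isUniform_range _ p q h
    (fun i j hij he => hij.ne (hinj he)), ?_⟩
  rw [← infinite_iff]
  exact (Set.infinite_range_of_injective hinj).to_subtype

/-- The end-homogeneous sequence attached to a point `x`. -/
noncomputable def ehSeq {L : Type u} {C : Type v} {J : Type w} [LT J] [WellFoundedLT J]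
    (c : L → L → C) (x : L) : J → L :=
  (wellFounded_lt (α := J)).fix fun α ih =>
    @Classical.epsilon L ⟨x⟩ fun y => ∀ β (h : β < α), c (ih β h) y = c (ih β h) x

theorem ehSeq_eq {L : Type u} {C : Type v} {J : Type w} [LT J] [WellFoundedLT J]
    (c : L → L → C) (x : L) (α : J) : ehSeq c x α =
      @Classical.epsilon L ⟨x⟩ fun y => ∀ β, β < α → c (ehSeq c x β) y = c (ehSeq c x β) x := by
  unfold ehSeq
  rw [WellFounded.fix_eq]

theorem ehSeq_spec {L : Type u} {C : Type v} {J : Type w} [LT J] [WellFoundedLT J]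
    (c : L → L → C) (x : L) (α β : J) (h : β < α) :
    c (ehSeq c x β) (ehSeq c x α) = c (ehSeq c x β) x := by
  have := Classical.epsilon_spec
    (p := fun y => ∀ β, β < α → c (ehSeq c x β) y = c (ehSeq c x β) x) ⟨x, fun _ _ => rfl⟩
  rw [ehSeq_eq c x α]
  exact this β h

theorem ehSeq_congr {L : Type u} {C : Type v} {J : Type w} [Preorder J] [WellFoundedLT J]
    (c : L → L → C) (x y : L) (α : J)
    (h : ∀ β, β < α → c (ehSeq c x β) x = c (ehSeq c y β) y) :
    ∀ γ, γ ≤ α → (ehSeq c x γ : L) = ehSeq c y γ := by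
  intro γ
  induction γ using WellFoundedLT.induction with
  | ind γ ih =>
    intro hγ
    rw [ehSeq_eq c x γ, ehSeq_eq c y γ]
    congr 1
    funext z
    apply propext
    refine forall_congr' fun β => forall_congr' fun hβ => ?_
    rw [h β (hβ.trans_le hγ), ih β hβ (hβ.le.trans hγ)]

theorem exists_uniform_of_lt {L : Type u} [PartialOrder L] (l θ : Cardinal.{u}) (hl : ℵ₀ ≤ l)
    (hlθ : l ≤ θ) (hθ : ∀ a < l, 2 ^ a ≤ θ) (hL : θ < #L) :
    ∃ A : Set L, IsUniform A ∧ l ≤ #A := by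
  let J := l.ord.ToType
  let C := ULift.{u} (Prop × Prop)
  have hC : #C = 2 * 2 := by simp [C]; norm_num
  let c : L → L → C := fun a b => ⟨(a ≤ b, b ≤ a)⟩
  have hJ : #J = l := mk_ord_toType l
  have hex : ∃ x : L, ∀ α : J, ehSeq c x α ≠ x := by
    by_contra! hcon
    choose α hα using hcon
    let Φ : L → Σ a : J, (Set.Iio a → C) := fun x => ⟨α x, fun β => c (ehSeq c x β.1) x⟩
    have hΦ : Function.Injective Φ := by
      intro x y hxy
      have h1 : α x = α y := congrArg Sigma.fst hxy
      have h2 : ∀ β, β < α x → c (ehSeq c x β) x = c (ehSeq c y β) y := by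
        have : ∀ (a b : J) (F : Set.Iio a → C) (G : Set.Iio b → C),
            (⟨a, F⟩ : Σ a : J, (Set.Iio a → C)) = ⟨b, G⟩ →
            ∀ β (h : β < a) (h' : β < b), F ⟨β, h⟩ = G ⟨β, h'⟩ := by
          intro a b F G hFG β h h'
          cases hFG
          rfl
        intro β hβ
        exact this _ _ _ _ hxy β hβ (h1 ▸ hβ)
      have := ehSeq_congr c x y (α x) h2 (α x) le_rfl
      rw [hα x] at this
      rw [this, h1, hα y]
    have hle := mk_le_of_injective hΦ
    rw [mk_sigma] at hle
    have hle2 : (Cardinal.sum fun a : J => #(Set.Iio a → C)) ≤ Cardinal.sum fun _ : J => θ := by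
      apply sum_le_sum
      intro a
      have ha : #(Set.Iio a) < l := mk_Iio_toType_ord_lt a
      have : #(Set.Iio a → C) = 2 ^ (#(Set.Iio a) + #(Set.Iio a)) := by
        rw [power_add, ← mul_power, ← hC, power_def]
      rw [this]
      exact hθ _ (add_lt_of_lt hl ha ha)
    rw [sum_const', hJ, mul_eq_right (hl.trans hlθ) hlθ
      (aleph0_pos.trans_le hl).ne'] at hle2
    exact absurd (hle.trans hle2) (not_le.2 hL)
  obtain ⟨x, hx⟩ := hex
  obtain ⟨a, ha⟩ := infinite_pigeonhole_card (fun α : J => c (ehSeq c x α) x) l hJ.ge hl (by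
    have h1 : #C < ℵ₀ := by
      rw [hC]; exact mul_lt_aleph0 (by simp) (by simp)
    refine h1.trans_le ?_
    exact Ordinal.aleph0_le_cof.2 (isSuccLimit_ord hl))
  let K := ((fun α : J => c (ehSeq c x α) x) ⁻¹' {a})
  let f : K → L := fun k => ehSeq c x k.1
  have hcol : ∀ i j : K, i < j → c (f i) (f j) = a := fun i j hij =>
    (ehSeq_spec c x j.1 i.1 hij).trans i.2
  have hne : ∀ i j : K, i < j → f i ≠ f j := by
    intro i j hij he
    have h1 : c (f i) (f j) = c (f i) x := ehSeq_spec c x j.1 i.1 hij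
    rw [← he] at h1
    have h2 := congrArg ULift.down h1
    have h3 : (f i ≤ f i) = (f i ≤ x) := congrArg Prod.fst h2
    have h4 : (f i ≤ f i) = (x ≤ f i) := congrArg Prod.snd h2
    exact hx i.1 (le_antisymm (h3 ▸ le_rfl) (h4 ▸ le_rfl))
  refine ⟨Set.range f, isUniform_range f a.down.1 a.down.2 ?_ hne, ?_⟩
  · intro i j hij
    rw [← hcol i j hij]
    exact ⟨Iff.rfl, Iff.rfl⟩
  · have hinj : Function.Injective f := by
      intro i j he
      rcases lt_trichotomy i j with h | h | h
      · exact absurd he (hne i j h)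
      · exact h
      · exact absurd he.symm (hne j i h)
    rw [mk_range_eq f hinj]
    exact ha

theorem lt_mu_of_uniform {L : Type u} [PartialOrder L] {A : Set L} (hA : IsUniform A) :
    #A < mu L := by
  by_contra! h
  have hne : {m : Cardinal.{u} | ¬ ∃ A : Set L, IsUniform A ∧ #A = m}.Nonempty := by
    refine ⟨Order.succ #L, ?_⟩
    rintro ⟨B, -, hB⟩
    exact absurd (mk_set_le B) (by rw [hB]; exact not_le.2 (Order.lt_succ _))
  have hmem := csInf_mem hne
  obtain ⟨p, hp, hpc⟩ := le_mk_iff_exists_subset.1 h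
  exact hmem ⟨p, hA.subset hp, hpc⟩

/-- For a strong limit cardinal `κ` and a partial order `L`: `κ ≤ μ(L) ↔ κ ≤ |L|`;
moreover `|L| > κ` implies `μ(L) > κ`, and `μ(L) = κ` implies `|L| = κ`. -/
theorem mu_strong_limit (L : Type u) [PartialOrder L] (κ : Cardinal.{u})
    (hκ : κ.IsStrongLimit) :
    (κ ≤ mu L ↔ κ ≤ #L) ∧ (κ < #L → κ < mu L) ∧ (mu L = κ → #L = κ) := by
  have hinf : ℵ₀ ≤ κ := hκ.aleph0_le
  have hpow : ∀ a < κ, 2 ^ a < κ := fun a ha => hκ.isStrongPrelimit ha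
  have h1 : κ ≤ mu L ↔ κ ≤ #L := by
    constructor
    · intro h
      by_contra! hlt
      have h2 : 2 ^ #L < mu L := (hpow _ hlt).trans_le h
      have h3 := notMem_of_lt_csInf' h2
      simp only [Set.mem_setOf_eq, not_not] at h3
      obtain ⟨A, -, hA⟩ := h3
      exact absurd (mk_set_le A) (by rw [hA]; exact not_le.2 (cantor _))
    · intro h
      refine le_of_forall_lt fun l hl => ?_
      rcases lt_or_ge l ℵ₀ with hf | hf
      · obtain ⟨A, hA, hc⟩ := exists_uniform_aleph0 (hinf.trans h)
        exact hf.trans (hc.trans_lt (lt_mu_of_uniform hA))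
      · obtain ⟨A, hA, hc⟩ := exists_uniform_of_lt (L := L) l (2 ^ l) hf (cantor l).le
          (fun a ha => power_le_power_left two_ne_zero ha.le) ((hpow l hl).trans_le h)
        exact hc.trans_lt (lt_mu_of_uniform hA)
  have h2 : κ < #L → κ < mu L := by
    intro h
    obtain ⟨A, hA, hc⟩ := exists_uniform_of_lt (L := L) κ κ hinf le_rfl
      (fun a ha => (hpow a ha).le) h
    exact hc.trans_lt (lt_mu_of_uniform hA)
  refine ⟨h1, h2, fun h => ?_⟩
  refine le_antisymm ?_ (h1.1 h.ge)
  by_contra! hlt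
  exact absurd h (h2 hlt).ne'
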